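/- arXiv:2412.13066 — 2 statements merged into one kernel-verified Lean document; each statement's English description precedes it below -/
import Mathlib

section
/- Let r,s ∈ (4/3,∞] with 1 < 2/r + 3/s < 3/2. Suppose there exists C > 0 such that for every ν > 0 and every u₀ ∈ L²_σ there exists a weak solution u^ν ∈ W_ν(u₀) with ‖u^ν‖_{L^∞(0,∞;L²)} + √ν ‖∇u^ν‖_{L²(0,∞;L²)} ≤ C ‖u₀‖_{L²} and ‖u^ν‖_{L^r(0,∞;L^s)} ≤ C ν^{−3(5/(3r)+2/s−1)} ‖u₀‖_{L²}^{2(2/r+3/s−1)}. Then 5/(3r) + 2/s ≥ 1. (This is the implication (ii) ⇒ (iii) of the main theorem in the case X = L^s(ℝ³;ℝ³), Z = L²_σ.) -/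
open MeasureTheory ENNReal Set Filter

noncomputable section

abbrev E3 : Type := EuclideanSpace ℝ (Fin 3)

/-- Spatial partial derivative of a scalar function in the `j`-th coordinate direction. -/
def pd (f : E3 → ℝ) (j : Fin 3) (x : E3) : ℝ :=
  fderiv ℝ f x (EuclideanSpace.single j 1)

/-- Divergence-free in the sense of distributions. -/
def IsDivFree (v : E3 → E3) : Prop :=
  ∀ φ : E3 → ℝ, ContDiff ℝ (⊤ : ℕ∞) φ → HasCompactSupport φ →
    ∫ x : E3, ∑ i, v x i * pd φ i x = 0

/-- The space-time measure on `(0,∞) × ℝ³`. -/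
def μST : Measure (ℝ × E3) := (volume.restrict (Ioi (0:ℝ))).prod volume

/-- Mixed norm `L^r(I; L^s)`. -/
def mixedNorm (r s : ℝ≥0∞) (I : Set ℝ) (u : ℝ → E3 → E3) : ℝ≥0∞ :=
  if r = ∞ then essSup (fun t => eLpNorm (u t) s volume) (volume.restrict I)
  else (∫⁻ t in I, (eLpNorm (u t) s volume) ^ r.toReal) ^ (1 / r.toReal)

/-- Squared spatial `L²` norm of the (matrix-valued) gradient at time `t`. -/
def gradSq (G : ℝ → E3 → Fin 3 → Fin 3 → ℝ) (t : ℝ) : ℝ≥0∞ :=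
  ∫⁻ x : E3, ∑ i, ∑ j, ENNReal.ofReal ((G t x i j) ^ 2)

/-- `L²((0,∞); L²)` norm of the gradient. -/
def gradL2 (G : ℝ → E3 → Fin 3 → Fin 3 → ℝ) : ℝ≥0∞ :=
  (∫⁻ t in Ioi (0:ℝ), gradSq G t) ^ (1/2 : ℝ)

/-- `G` is the distributional spatial gradient of `u` on `ℝ³ × (0,∞)`. -/
def IsDistGrad (u : ℝ → E3 → E3) (G : ℝ → E3 → Fin 3 → Fin 3 → ℝ) : Prop :=
  ∀ ψ : ℝ × E3 → ℝ, ContDiff ℝ (⊤ : ℕ∞) ψ → HasCompactSupport ψ →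
    tsupport ψ ⊆ {p | 0 < p.1} → ∀ i j,
    (∫ p, u p.1 p.2 i * pd (fun y => ψ (p.1, y)) j p.2 ∂μST)
      = - ∫ p, G p.1 p.2 i j * ψ p ∂μST

/-- Admissible space-time test function: smooth, compactly supported in `ℝ³ × [0,∞)`
and divergence-free. -/
def IsTest (φ : ℝ × E3 → E3) : Prop :=
  ContDiff ℝ (⊤ : ℕ∞) φ ∧ HasCompactSupport φ ∧
    ∀ p : ℝ × E3, ∑ i, pd (fun y => φ (p.1, y) i) i p.2 = 0

def timeDeriv (φ : ℝ × E3 → E3) (p : ℝ × E3) (i : Fin 3) : ℝ :=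
  deriv (fun τ => φ (τ, p.2) i) p.1

def spaceLap (φ : ℝ × E3 → E3) (p : ℝ × E3) (i : Fin 3) : ℝ :=
  ∑ j, pd (fun y => pd (fun z => φ (p.1, z) i) j y) j p.2

def spaceGrad (φ : ℝ × E3 → E3) (p : ℝ × E3) (i j : Fin 3) : ℝ :=
  pd (fun y => φ (p.1, y) i) j p.2

/-- Weak solution of the Navier–Stokes equations on `ℝ³ × (0,∞)` with viscosity `ν`,
datum `u₀` and distributional spatial gradient `G`. -/
def IsWeakNS (ν : ℝ) (u₀ : E3 → E3) (u : ℝ → E3 → E3)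
    (G : ℝ → E3 → Fin 3 → Fin 3 → ℝ) : Prop :=
  AEStronglyMeasurable (Function.uncurry u) μST ∧
  mixedNorm ∞ 2 (Ioi 0) u < ∞ ∧
  (∀ᵐ t ∂(volume.restrict (Ioi (0:ℝ))), IsDivFree (u t)) ∧
  AEStronglyMeasurable (Function.uncurry G) μST ∧
  (∫⁻ t in Ioi (0:ℝ), gradSq G t) < ∞ ∧
  IsDistGrad u G ∧
  ∀ φ : ℝ × E3 → E3, IsTest φ →
    (∫ p,
        ((∑ i, u p.1 p.2 i * (timeDeriv φ p i + ν * spaceLap φ p i)) +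
         ∑ i, ∑ j, u p.1 p.2 i * u p.1 p.2 j * spaceGrad φ p i j) ∂μST)
      = - ∫ x : E3, ∑ i, u₀ x i * φ (0, x) i

/-- Leray–Hopf solution: weak solution satisfying the energy inequality. -/
def IsLerayHopf (ν : ℝ) (u₀ : E3 → E3) (u : ℝ → E3 → E3)
    (G : ℝ → E3 → Fin 3 → Fin 3 → ℝ) : Prop :=
  IsWeakNS ν u₀ u G ∧
  ∀ᵐ t ∂(volume.restrict (Ioi (0:ℝ))),
    ENNReal.ofReal (1/2) * (eLpNorm (u t) 2 volume) ^ (2:ℕ)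
        + ENNReal.ofReal ν * ∫⁻ τ in Ioc (0:ℝ) t, gradSq G τ
      ≤ ENNReal.ofReal (1/2) * (eLpNorm u₀ 2 volume) ^ (2:ℕ)

/-- `L²_σ`: divergence-free fields in `L²(ℝ³;ℝ³)`, as a subset of `L²`. -/
def L2σ : Set (Lp E3 2 (volume : Measure E3)) := {v | IsDivFree ⇑v}

theorem pd_contDiff {f : E3 → ℝ} (hf : ContDiff ℝ (⊤ : ℕ∞) f) (j : Fin 3) :
    ContDiff ℝ (⊤ : ℕ∞) (pd f j) :=
  (hf.fderiv_right (m := (⊤ : ℕ∞)) (by simp)).clm_apply contDiff_const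

theorem tsupport_pd_subset (f : E3 → ℝ) (j : Fin 3) : tsupport (pd f j) ⊆ tsupport f :=
  tsupport_fderiv_apply_subset ℝ _

theorem pd_const_mul (c : ℝ) (f : E3 → ℝ) (j : Fin 3) (x : E3) :
    pd (fun y => c * f y) j x = c * pd f j x := by
  have h : fderiv ℝ (c • f) = c • fderiv ℝ f := fderiv_const_smul_field c
  have h' : fderiv ℝ (fun y => c * f y) = c • fderiv ℝ f := h
  simp [pd, h']

theorem pd_comm {f : E3 → ℝ} (hf : ContDiff ℝ (⊤ : ℕ∞) f) (i j : Fin 3) (x : E3) :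
    pd (pd f i) j x = pd (pd f j) i x := by
  have hd : Differentiable ℝ (fderiv ℝ f) :=
    (hf.fderiv_right (m := (⊤ : ℕ∞)) (by simp)).differentiable (by simp)
  have key : ∀ k l : Fin 3, pd (pd f k) l x =
      fderiv ℝ (fderiv ℝ f) x (EuclideanSpace.single l 1) (EuclideanSpace.single k 1) := by
    intro k l
    have h : fderiv ℝ (fun y => fderiv ℝ f y (EuclideanSpace.single k 1)) x
        = _ := fderiv_clm_apply (hd x) (differentiableAt_const _)
    have h' : pd (pd f k) l x = fderiv ℝ (fun y => fderiv ℝ f y (EuclideanSpace.single k 1)) x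
      (EuclideanSpace.single l 1) := rfl
    rw [h', h]
    simp
  rw [key, key]
  exact (hf.contDiffAt.isSymmSndFDerivAt (by
    rw [minSmoothness_of_isRCLikeNormedField]; exact WithTop.coe_le_coe.2 le_top)) _ _

/-- A nonconstant compactly supported smooth function has a nonvanishing partial derivative in
each direction. -/
theorem exists_pd_ne_zero {f : E3 → ℝ} (hf : ContDiff ℝ (⊤ : ℕ∞) f) (hc : HasCompactSupport f)
    (h0 : f 0 ≠ 0) (j : Fin 3) : ∃ x, pd f j x ≠ 0 := by
  by_contra! h
  have hline : ∀ t : ℝ, HasDerivAt (fun t : ℝ => f (t • EuclideanSpace.single j (1 : ℝ))) 0 t := by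
    intro t
    have h1 : HasDerivAt (fun t : ℝ => t • EuclideanSpace.single j (1 : ℝ))
        (EuclideanSpace.single j (1 : ℝ)) t := by
      simpa using (hasDerivAt_id t).smul_const (EuclideanSpace.single j (1 : ℝ))
    have h2 := ((hf.differentiable (by simp)) (t • EuclideanSpace.single j (1 : ℝ))).hasFDerivAt
      |>.comp_hasDerivAt t h1
    have h3 : fderiv ℝ f (t • EuclideanSpace.single j (1 : ℝ)) (EuclideanSpace.single j 1) = 0 :=
      h _
    rwa [h3] at h2
  have hconst := is_const_of_deriv_eq_zero (fun t => (hline t).differentiableAt)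
    (fun t => (hline t).deriv)
  obtain ⟨R, hR⟩ := hc.isCompact.isBounded.exists_norm_le
  have hz : f ((|R| + 1) • EuclideanSpace.single j (1 : ℝ)) = 0 := by
    by_contra hne
    have h4 := hR _ (subset_tsupport _ hne)
    rw [norm_smul, PiLp.norm_single, Real.norm_of_nonneg (by positivity)] at h4
    simp only [norm_one, mul_one] at h4
    linarith [le_abs_self R]
  have h5 := hconst 0 (|R| + 1)
  simp only [zero_smul] at h5
  exact h0 (h5.trans hz)

theorem exists_divFree_testField : ∃ v : E3 → E3, ContDiff ℝ (⊤ : ℕ∞) v ∧ HasCompactSupport v ∧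
    (∀ x, ∑ i, pd (fun y => v y i) i x = 0) ∧ ∃ x, v x ≠ 0 := by
  let b : ContDiffBump (0 : E3) := ⟨1, 2, one_pos, one_lt_two⟩
  have hb : ContDiff ℝ (⊤ : ℕ∞) b := b.contDiff
  have hc : HasCompactSupport b := b.hasCompactSupport
  refine ⟨fun x => !₂[pd b 1 x, -pd b 0 x, 0], ?_, ?_, ?_, ?_⟩
  · refine contDiff_euclidean.2 fun i => ?_
    fin_cases i
    · exact pd_contDiff hb 1
    · exact (pd_contDiff hb 0).neg
    · exact contDiff_const
  · refine HasCompactSupport.intro hc.isCompact fun x hx => ?_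
    have h : ∀ j, pd b j x = 0 := fun j =>
      image_eq_zero_of_notMem_tsupport fun h => hx (tsupport_pd_subset _ j h)
    ext i
    fin_cases i <;> simp [h]
  · intro x
    have h1 : pd (fun y => -pd b 0 y) 1 x = - pd (pd b 0) 1 x := by
      simpa using pd_const_mul (-1) (pd b 0) 1 x
    have h2 : pd (fun _ : E3 => (0 : ℝ)) 2 x = 0 := by simp [pd]
    rw [Fin.sum_univ_three]
    change pd (pd b 1) 0 x + pd (fun y => -pd b 0 y) 1 x + pd (fun _ : E3 => (0 : ℝ)) 2 x = 0
    rw [h1, h2, pd_comm hb 1 0 x]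
    ring
  · obtain ⟨x, hx⟩ := exists_pd_ne_zero hb hc (by
      rw [b.one_of_mem_closedBall (by simp [b])]; exact one_ne_zero) 1
    exact ⟨x, fun h => hx (by simpa using congrArg (fun w : E3 => w 0) h)⟩

theorem isDivFree_of_smooth {v : E3 → E3} (hv : ContDiff ℝ (⊤ : ℕ∞) v)
    (hdiv : ∀ x, ∑ i, pd (fun y => v y i) i x = 0) : IsDivFree v := by
  intro φ hφ hφc
  have hvi : ∀ i, ContDiff ℝ (⊤ : ℕ∞) (fun y => v y i) := contDiff_euclidean.1 hv
  have int1 : ∀ i, Integrable (fun x => v x i * pd φ i x) := fun i =>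
    ((hvi i).continuous.mul (pd_contDiff hφ i).continuous).integrable_of_hasCompactSupport
      (HasCompactSupport.mul_left (hφc.mono' ((subset_tsupport _).trans (tsupport_pd_subset φ i))))
  have int2 : ∀ i, Integrable (fun x => pd (fun y => v y i) i x * φ x) := fun i =>
    ((pd_contDiff (hvi i) i).continuous.mul hφ.continuous).integrable_of_hasCompactSupport
      (HasCompactSupport.mul_left hφc)
  have int3 : ∀ i, Integrable (fun x => v x i * φ x) := fun i =>
    ((hvi i).continuous.mul hφ.continuous).integrable_of_hasCompactSupport
      (HasCompactSupport.mul_left hφc)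
  rw [integral_finsetSum _ fun i _ => int1 i]
  have hparts : ∀ i, ∫ x, v x i * pd φ i x = - ∫ x, pd (fun y => v y i) i x * φ x := fun i =>
    integral_mul_fderiv_eq_neg_fderiv_mul_of_integrable (int2 i) (int1 i) (int3 i)
      (fun x _ => (hvi i).differentiable (by simp) x) (fun x _ => hφ.differentiable (by simp) x)
  simp_rw [hparts]
  rw [Finset.sum_neg_distrib, ← integral_finsetSum _ fun i _ => int2 i]
  simp_rw [← Finset.sum_mul, hdiv]
  simp

theorem mixedNorm_eq_eLpNorm {r : ℝ≥0∞} (hr : r ≠ 0) (s : ℝ≥0∞) (I : Set ℝ) (u : ℝ → E3 → E3) :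
    mixedNorm r s I u = eLpNorm (fun t => eLpNorm (u t) s volume) r (volume.restrict I) := by
  unfold mixedNorm
  split_ifs with h
  · rw [h, eLpNorm_exponent_top]; rfl
  · rw [eLpNorm_eq_lintegral_rpow_enorm_toReal hr h]; rfl

theorem lintegral_add_sq_le_mixedNorm {r s : ℝ≥0∞} (hr : 1 ≤ r) (hs : 2 ≤ s)
    {u : ℝ → E3 → E3} (hu : AEStronglyMeasurable (Function.uncurry u) μST) {J : Set ℝ} {B : Set E3}
    (hB : volume B ≠ ∞) {A : ℝ≥0∞} (hA : mixedNorm ∞ 2 (Ioi 0) u ≤ A) :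
    ∫⁻ p in J ×ˢ B, (‖u p.1 p.2‖ₑ + ‖u p.1 p.2‖ₑ ^ 2) ∂μST ≤
      (volume B ^ (1 / 2 : ℝ) + A) * (volume B ^ (1 / 2 - 1 / s.toReal) * mixedNorm r s (Ioi 0) u *
        volume J ^ (1 - 1 / r.toReal)) := by
  set b : ℝ≥0∞ := volume B ^ (1 / 2 - 1 / s.toReal) with hbdef
  have hsinv : 0 ≤ 1 / 2 - 1 / s.toReal := by
    rcases eq_or_ne s ∞ with rfl | hst
    · simp
    · have : 2 ≤ s.toReal := by simpa using ENNReal.toReal_mono hst hs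
      rw [sub_nonneg]
      exact one_div_le_one_div_of_le two_pos this
  have hb : b ≠ ∞ := ENNReal.rpow_ne_top_of_nonneg hsinv hB
  have hrinv : 0 ≤ 1 - 1 / r.toReal := by
    rcases eq_or_ne r ∞ with rfl | hrt
    · simp
    · have : 1 ≤ r.toReal := by simpa using ENNReal.toReal_mono hrt hr
      rw [sub_nonneg]
      exact (div_le_one (by linarith)).2 this
  set l : Measure ℝ := volume.restrict (Ioi 0) with hl
  have hu' : AEStronglyMeasurable (Function.uncurry u) (l.prod volume) := hu
  have hslice : ∀ᵐ t ∂l, AEStronglyMeasurable (u t) volume := hu'.prodMk_left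
  have hres : μST.restrict (J ×ˢ B) = (l.restrict J).prod (volume.restrict B) :=
    (Measure.prod_restrict J B).symm
  have hu2 : AEStronglyMeasurable (Function.uncurry u) (l.prod (volume.restrict B)) := by
    refine hu'.mono_ac ?_
    exact Measure.AbsolutelyContinuous.prod .rfl Measure.restrict_le_self.absolutelyContinuous
  have hu3 : AEStronglyMeasurable (Function.uncurry u)
      ((l.restrict J).prod (volume.restrict B)) := hres ▸ hu.restrict
  set S : ℝ → ℝ≥0∞ := fun t => eLpNorm (u t) 2 (volume.restrict B) with hS
  have hSm : AEMeasurable S l := by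
    have h1 : AEMeasurable (fun t => ∫⁻ x in B, ‖u t x‖ₑ ^ (2 : ℝ)) l :=
      AEMeasurable.lintegral_prod_right' (f := fun p : ℝ × E3 => ‖u p.1 p.2‖ₑ ^ (2 : ℝ))
        (hu2.enorm.pow_const _)
    have h2 : S = fun t => (∫⁻ x in B, ‖u t x‖ₑ ^ (2 : ℝ)) ^ (1 / 2 : ℝ) := by
      funext t
      simp only [hS]
      rw [eLpNorm_eq_lintegral_rpow_enorm_toReal (by simp) (by simp)]
      simp
    rw [h2]
    exact h1.pow_const _
  have hSA : ∀ᵐ t ∂l, S t ≤ A := by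
    have h1 : ∀ᵐ t ∂l, eLpNorm (u t) 2 volume ≤ mixedNorm ∞ 2 (Ioi 0) u := by
      simp only [mixedNorm, if_true]
      exact ENNReal.ae_le_essSup _
    filter_upwards [h1] with t ht
    exact (eLpNorm_mono_measure _ Measure.restrict_le_self).trans (ht.trans hA)
  have hSs : ∀ᵐ t ∂l, S t ≤ b * eLpNorm (u t) s volume := by
    filter_upwards [hslice] with t ht
    have h1 := eLpNorm_le_eLpNorm_mul_rpow_measure_univ hs (ht.restrict (s := B))
    rw [Measure.restrict_apply_univ, ENNReal.toReal_ofNat] at h1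
    refine h1.trans ?_
    rw [mul_comm]
    gcongr
    exact Measure.restrict_le_self
  have hSr : eLpNorm S r l ≤ b * mixedNorm r s (Ioi 0) u := by
    rw [mixedNorm_eq_eLpNorm (zero_lt_one.trans_le hr).ne']
    have h1 := eLpNorm_le_nnreal_smul_eLpNorm_of_ae_le_mul' (f := S)
      (g := fun t => eLpNorm (u t) s volume) (c := b.toNNReal) (μ := l)
      (by simpa [ENNReal.coe_toNNReal hb] using hSs) r
    rwa [ENNReal.smul_def, smul_eq_mul, ENNReal.coe_toNNReal hb] at h1
  have hSint : ∫⁻ t in J, S t ∂l ≤ b * mixedNorm r s (Ioi 0) u * volume J ^ (1 - 1 / r.toReal) := by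
    have h1 := eLpNorm_le_eLpNorm_mul_rpow_measure_univ hr
      (hSm.restrict (s := J)).aestronglyMeasurable
    rw [eLpNorm_one_eq_lintegral_enorm, Measure.restrict_apply_univ, ENNReal.toReal_one,
      div_one] at h1
    refine le_trans h1 ?_
    gcongr
    · exact (eLpNorm_mono_measure _ Measure.restrict_le_self).trans hSr
    · exact Measure.restrict_le_self
  rw [hres, lintegral_prod _ (by exact hu3.enorm.add (hu3.enorm.pow_const 2))]
  calc ∫⁻ t in J, ∫⁻ x in B, (‖u t x‖ₑ + ‖u t x‖ₑ ^ 2) ∂volume ∂l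
      ≤ ∫⁻ t in J, (volume B ^ (1 / 2 : ℝ) + A) * S t ∂l := by
        refine lintegral_mono_ae (ae_restrict_of_ae ?_)
        filter_upwards [hslice, hSA] with t ht htA
        rw [lintegral_add_left' ht.restrict.enorm, add_mul]
        have e1 : ∫⁻ x in B, ‖u t x‖ₑ ≤ volume B ^ (1 / 2 : ℝ) * S t := by
          have h1 := eLpNorm_le_eLpNorm_mul_rpow_measure_univ (p := 1) (q := 2) (by norm_num)
            (ht.restrict (s := B))
          rw [eLpNorm_one_eq_lintegral_enorm, Measure.restrict_apply_univ, ENNReal.toReal_one,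
            ENNReal.toReal_ofNat, mul_comm] at h1
          convert h1 using 2
          norm_num
        have e2 : ∫⁻ x in B, ‖u t x‖ₑ ^ 2 = S t * S t := by
          simp only [hS]
          rw [eLpNorm_eq_lintegral_rpow_enorm_toReal (by simp) (by simp), ← sq,
            ← ENNReal.rpow_natCast, ← ENNReal.rpow_mul]
          simp
        rw [e2]
        gcongr
    _ = (volume B ^ (1 / 2 : ℝ) + A) * ∫⁻ t in J, S t ∂l :=
        lintegral_const_mul'' _ hSm.restrict
    _ ≤ _ := by gcongr

/-- The separated field `η(t) v(x)`. -/
def sepField (η : ℝ → ℝ) (v : E3 → E3) (p : ℝ × E3) : E3 := η p.1 • v p.2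

section sepField

variable {η : ℝ → ℝ} {v : E3 → E3}

theorem timeDeriv_sepField (hη : ContDiff ℝ (⊤ : ℕ∞) η) (p : ℝ × E3) (i : Fin 3) :
    timeDeriv (sepField η v) p i = deriv η p.1 * v p.2 i := by
  simp only [timeDeriv, sepField, PiLp.smul_apply, smul_eq_mul]
  exact deriv_mul_const (hη.differentiable (by simp) _) _

theorem spaceGrad_sepField (p : ℝ × E3) (i j : Fin 3) :
    spaceGrad (sepField η v) p i j = η p.1 * pd (fun y => v y i) j p.2 := by
  simp only [spaceGrad, sepField, PiLp.smul_apply, smul_eq_mul]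
  exact pd_const_mul _ _ _ _

theorem spaceLap_sepField (p : ℝ × E3) (i : Fin 3) :
    spaceLap (sepField η v) p i = η p.1 * ∑ j, pd (pd (fun y => v y i) j) j p.2 := by
  simp only [spaceLap, sepField, PiLp.smul_apply, smul_eq_mul, Finset.mul_sum]
  refine Finset.sum_congr rfl fun j _ => ?_
  rw [funext fun y => pd_const_mul (η p.1) (fun z => v z i) j y]
  exact pd_const_mul _ _ _ _

theorem isTest_sepField (hη : ContDiff ℝ (⊤ : ℕ∞) η) (hηc : HasCompactSupport η)
    (hv : ContDiff ℝ (⊤ : ℕ∞) v) (hc : HasCompactSupport v)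
    (hdiv : ∀ x, ∑ i, pd (fun y => v y i) i x = 0) : IsTest (sepField η v) := by
  refine ⟨(hη.comp contDiff_fst).smul (hv.comp contDiff_snd), ?_, fun p => ?_⟩
  · refine HasCompactSupport.intro (hηc.isCompact.prod hc.isCompact) fun p hp => ?_
    rw [mem_prod, not_and_or] at hp
    rcases hp with hp | hp <;> simp [sepField, image_eq_zero_of_notMem_tsupport hp]
  · have h := fun i => spaceGrad_sepField (η := η) (v := v) p i i
    simp only [spaceGrad] at h
    simp_rw [h, ← Finset.mul_sum, hdiv, mul_zero]

theorem tsupport_coord_subset (v : E3 → E3) (i : Fin 3) : tsupport (fun y => v y i) ⊆ tsupport v :=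
  tsupport_comp_subset (g := fun w : E3 => w i) rfl v

theorem weakIntegrand_sepField_bound (hη : ContDiff ℝ (⊤ : ℕ∞) η) (hηc : HasCompactSupport η)
    (hv : ContDiff ℝ (⊤ : ℕ∞) v) (hc : HasCompactSupport v) :
    ∃ M : ℝ, 0 ≤ M ∧ ∀ ν : ℝ, 0 < ν → ν ≤ 1 → ∀ (p : ℝ × E3) (w : E3),
      |(∑ i, w i * (timeDeriv (sepField η v) p i + ν * spaceLap (sepField η v) p i)) +
        ∑ i, ∑ j, w i * w j * spaceGrad (sepField η v) p i j| ≤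
      (tsupport η ×ˢ tsupport v).indicator (fun _ => M * (‖w‖ + ‖w‖ ^ 2)) p := by
  have hvi : ∀ i, ContDiff ℝ (⊤ : ℕ∞) (fun y => v y i) := contDiff_euclidean.1 hv
  have s0 := tsupport_coord_subset v
  have s1 : ∀ i j, tsupport (pd (fun y => v y i) j) ⊆ tsupport v :=
    fun i j => (tsupport_pd_subset _ j).trans (s0 i)
  have s2 : ∀ i j, tsupport (pd (pd (fun y => v y i) j) j) ⊆ tsupport v :=
    fun i j => (tsupport_pd_subset _ j).trans (s1 i j)
  have bd : ∀ f : E3 → ℝ, Continuous f → tsupport f ⊆ tsupport v → ∃ C : ℝ, ∀ x, |f x| ≤ C :=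
    fun f hf hs => (hc.mono' ((subset_tsupport f).trans hs)).exists_bound_of_continuous hf
  choose C0 hC0 using fun i => bd _ (hvi i).continuous (s0 i)
  choose C1 hC1 using fun i j => bd _ (pd_contDiff (hvi i) j).continuous (s1 i j)
  choose C2 hC2 using fun i j => bd _ (pd_contDiff (pd_contDiff (hvi i) j) j).continuous (s2 i j)
  obtain ⟨E0, hE0⟩ : ∃ C : ℝ, ∀ x, |η x| ≤ C := hηc.exists_bound_of_continuous hη.continuous
  obtain ⟨E1, hE1⟩ : ∃ C : ℝ, ∀ x, |deriv η x| ≤ C :=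
    hηc.deriv.exists_bound_of_continuous (hη.continuous_deriv (by simp))
  have hC0n : ∀ i, 0 ≤ C0 i := fun i => (abs_nonneg _).trans (hC0 i 0)
  have hC1n : ∀ i j, 0 ≤ C1 i j := fun i j => (abs_nonneg _).trans (hC1 i j 0)
  have hC2n : ∀ i j, 0 ≤ C2 i j := fun i j => (abs_nonneg _).trans (hC2 i j 0)
  have hE0n : 0 ≤ E0 := (abs_nonneg _).trans (hE0 0)
  have hE1n : 0 ≤ E1 := (abs_nonneg _).trans (hE1 0)
  set P : ℝ := ∑ i, (E1 * C0 i + E0 * ∑ j, C2 i j) with hP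
  set Q : ℝ := ∑ i, ∑ j, E0 * C1 i j with hQ
  have hPn : 0 ≤ P := Finset.sum_nonneg fun i _ => add_nonneg (mul_nonneg hE1n (hC0n i))
    (mul_nonneg hE0n (Finset.sum_nonneg fun j _ => hC2n i j))
  have hQn : 0 ≤ Q := Finset.sum_nonneg fun i _ => Finset.sum_nonneg fun j _ =>
    mul_nonneg hE0n (hC1n i j)
  refine ⟨P + Q, add_nonneg hPn hQn, fun ν hν0 hν1 p w => ?_⟩
  simp_rw [timeDeriv_sepField hη, spaceLap_sepField, spaceGrad_sepField]
  by_cases hp : p ∈ tsupport η ×ˢ tsupport v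
  · rw [indicator_of_mem hp]
    have hw : ∀ i, |w i| ≤ ‖w‖ := fun i => PiLp.norm_apply_le w i
    have t1 : |∑ i, w i * (deriv η p.1 * v p.2 i +
        ν * (η p.1 * ∑ j, pd (pd (fun y => v y i) j) j p.2))| ≤ ‖w‖ * P := by
      rw [hP, Finset.mul_sum]
      refine (Finset.abs_sum_le_sum_abs _ _).trans (Finset.sum_le_sum fun i _ => ?_)
      rw [abs_mul]
      refine mul_le_mul (hw i) ?_ (abs_nonneg _) (norm_nonneg _)
      refine (abs_add_le _ _).trans (add_le_add ?_ ?_)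
      · rw [abs_mul]
        exact mul_le_mul (hE1 _) (hC0 i _) (abs_nonneg _) hE1n
      · rw [abs_mul, abs_mul, abs_of_pos hν0]
        have h3 : |∑ j, pd (pd (fun y => v y i) j) j p.2| ≤ ∑ j, C2 i j :=
          (Finset.abs_sum_le_sum_abs _ _).trans (Finset.sum_le_sum fun j _ => hC2 i j _)
        have h4 := mul_le_mul (hE0 p.1) h3 (abs_nonneg _) hE0n
        exact (mul_le_of_le_one_left (by positivity) hν1).trans h4
    have t2 : |∑ i, ∑ j, w i * w j * (η p.1 * pd (fun y => v y i) j p.2)| ≤ ‖w‖ ^ 2 * Q := by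
      simp_rw [hQ, Finset.mul_sum]
      refine (Finset.abs_sum_le_sum_abs _ _).trans (Finset.sum_le_sum fun i _ => ?_)
      refine (Finset.abs_sum_le_sum_abs _ _).trans (Finset.sum_le_sum fun j _ => ?_)
      rw [abs_mul, abs_mul, abs_mul, sq]
      exact mul_le_mul (mul_le_mul (hw i) (hw j) (abs_nonneg _) (norm_nonneg _))
        (mul_le_mul (hE0 _) (hC1 i j _) (abs_nonneg _) hE0n) (by positivity) (by positivity)
    refine (abs_add_le _ _).trans ((add_le_add t1 t2).trans ?_)
    nlinarith [norm_nonneg w, sq_nonneg ‖w‖, mul_nonneg (norm_nonneg w) hQn,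
      mul_nonneg (sq_nonneg ‖w‖) hPn]
  · rw [indicator_of_notMem hp]
    rw [mem_prod, not_and_or] at hp
    refine le_of_eq (abs_eq_zero.2 ?_)
    rcases hp with hp | hp
    · have h1 : η p.1 = 0 := image_eq_zero_of_notMem_tsupport hp
      have h2 : deriv η p.1 = 0 :=
        image_eq_zero_of_notMem_tsupport fun h => hp (tsupport_deriv_subset h)
      simp [h1, h2]
    · have h0 : v p.2 = 0 := image_eq_zero_of_notMem_tsupport hp
      have h1 : ∀ i j, pd (fun y => v y i) j p.2 = 0 := fun i j =>
        image_eq_zero_of_notMem_tsupport fun h => hp (s1 i j h)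
      have h2 : ∀ i j, pd (pd (fun y => v y i) j) j p.2 = 0 := fun i j =>
        image_eq_zero_of_notMem_tsupport fun h => hp (s2 i j h)
      simp [h0, h1, h2]

end sepField

/-- Implication (ii) ⇒ (iii) of the main theorem, for `X = L^s(ℝ³;ℝ³)`, `Z = L²_σ`:
the a priori estimate forces `5/(3r) + 2/s ≥ 1`. -/
theorem stmt_4 (r s : ℝ≥0∞) (hr : 4/3 < r) (hs : 4/3 < s)
    (h1 : 1 < 2/r + 3/s) (h2 : 2/r + 3/s < 3/2)
    (hyp : ∃ C : ℝ, 0 < C ∧ ∀ ν : ℝ, 0 < ν → ∀ u₀ : L2σ, ∃ u G,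
      IsWeakNS ν ((u₀ : Lp E3 2 (volume : Measure E3)) : E3 → E3) u G ∧
      mixedNorm ∞ 2 (Ioi 0) u + ENNReal.ofReal (Real.sqrt ν) * gradL2 G
        ≤ ENNReal.ofReal (C * ‖(u₀ : Lp E3 2 (volume : Measure E3))‖) ∧
      mixedNorm r s (Ioi 0) u
        ≤ ENNReal.ofReal (C * ν ^ (-(3:ℝ) * ((5/(3*r) + 2/s).toReal - 1)) *
            ‖(u₀ : Lp E3 2 (volume : Measure E3))‖ ^ ((2:ℝ) * ((2/r + 3/s).toReal - 1)))) :
    1 ≤ 5/(3*r) + 2/s := by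
  by_contra! hθ
  obtain ⟨C, hC, hyp⟩ := hyp
  have hθtop : 5 / (3 * r) + 2 / s ≠ ∞ := hθ.ne_top
  have hs2 : 2 ≤ s := by
    have h : 2 / s < 1 := lt_of_le_of_lt le_add_self hθ
    by_contra! h'
    refine absurd h (not_lt.2 ?_)
    rw [ENNReal.le_div_iff_mul_le (Or.inr (by simp)) (Or.inr (by simp)), one_mul]
    exact h'.le
  have hr1 : 1 ≤ r := by
    refine le_trans ?_ hr.le
    rw [ENNReal.le_div_iff_mul_le (Or.inl (by simp)) (Or.inl (by simp))]
    norm_num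
  set a : ℝ := -(3 : ℝ) * ((5 / (3 * r) + 2 / s).toReal - 1) with ha
  have ha0 : 0 < a := by
    have h : (5 / (3 * r) + 2 / s).toReal < 1 := by
      simpa using (ENNReal.toReal_lt_toReal hθtop ENNReal.one_ne_top).2 hθ
    rw [ha]
    linarith
  obtain ⟨v, hv, hc, hdiv, x₀, hx₀⟩ := exists_divFree_testField
  let η : ContDiffBump (0 : ℝ) := ⟨1, 2, one_pos, one_lt_two⟩
  have hη : ContDiff ℝ (⊤ : ℕ∞) η := η.contDiff
  have hηc : HasCompactSupport η := η.hasCompactSupport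
  have hη0 : η 0 = 1 := η.one_of_mem_closedBall (by simp [η])
  have hmem : MemLp v 2 volume := hv.continuous.memLp_of_hasCompactSupport hc
  have hae : hmem.toLp v =ᵐ[volume] v := hmem.coeFn_toLp
  have hdf : hmem.toLp v ∈ L2σ := by
    intro φ hφ hφc
    rw [← isDivFree_of_smooth hv hdiv φ hφ hφc]
    refine integral_congr_ae ?_
    filter_upwards [hae] with x hx
    rw [hx]
  set u₀ : L2σ := ⟨hmem.toLp v, hdf⟩ with hu₀
  obtain ⟨M, hM, hbound⟩ := weakIntegrand_sepField_bound hη hηc hv hc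
  have hI : 0 < ∫ x, ∑ i, v x i * v x i := by
    have hcont : Continuous fun x => ∑ i, v x i * v x i :=
      continuous_finsetSum _ fun i _ =>
        (contDiff_euclidean.1 hv i).continuous.mul (contDiff_euclidean.1 hv i).continuous
    refine hcont.integral_pos_of_hasCompactSupport_nonneg_nonzero (x := x₀) ?_ ?_ ?_
    · refine HasCompactSupport.intro hc.isCompact fun x hx => ?_
      simp [image_eq_zero_of_notMem_tsupport hx]
    · exact fun x => Finset.sum_nonneg fun i _ => mul_self_nonneg _
    · intro h
      rw [Finset.sum_eq_zero_iff_of_nonneg fun i _ => mul_self_nonneg _] at h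
      exact hx₀ (by ext i; simpa using h i (Finset.mem_univ i))
  set N : ℝ := ‖(u₀ : Lp E3 2 (volume : Measure E3))‖ with hN
  set J := tsupport η with hJ
  set B := tsupport v with hB
  have hBfin : volume B ≠ ∞ := hc.isCompact.measure_lt_top.ne
  have hJfin : volume J ≠ ∞ := hηc.isCompact.measure_lt_top.ne
  let A : ℝ≥0∞ := ENNReal.ofReal (C * N)
  let rhs : ℝ → ℝ≥0∞ := fun ν => ENNReal.ofReal M * ((volume B ^ (1 / 2 : ℝ) + A) *
    (volume B ^ (1 / 2 - 1 / s.toReal) *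
      ENNReal.ofReal (C * ν ^ a * N ^ ((2:ℝ) * ((2/r + 3/s).toReal - 1))) *
      volume J ^ (1 - 1 / r.toReal)))
  have hle : ∀ ν ∈ Ioc (0 : ℝ) 1, ENNReal.ofReal (∫ x, ∑ i, v x i * v x i) ≤ rhs ν := by
    rintro ν ⟨hν0, hν1⟩
    obtain ⟨u, G, ⟨hmeas, -, -, -, -, -, hweak⟩, hen, hmix⟩ := hyp ν hν0 u₀
    have hA : mixedNorm ∞ 2 (Ioi 0) u ≤ A := le_self_add.trans hen
    have hw := hweak _ (isTest_sepField hη hηc hv hc hdiv)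
    have hdata : ∫ x : E3, ∑ i, (u₀ : Lp E3 2 (volume : Measure E3)) x i * sepField η v (0, x) i
        = ∫ x, ∑ i, v x i * v x i := by
      refine integral_congr_ae ?_
      filter_upwards [hae] with x hx
      simp only [hu₀, hx, sepField, hη0, one_smul]
    rw [hdata] at hw
    have hnorm : ENNReal.ofReal (∫ x, ∑ i, v x i * v x i) =
        ‖-∫ x, ∑ i, v x i * v x i‖ₑ := by
      rw [enorm_neg, Real.enorm_of_nonneg hI.le]
    rw [hnorm, ← hw]
    refine (enorm_integral_le_lintegral_enorm _).trans ?_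
    calc _ ≤ ∫⁻ p, (J ×ˢ B).indicator
          (fun p => ENNReal.ofReal M * (‖u p.1 p.2‖ₑ + ‖u p.1 p.2‖ₑ ^ 2)) p ∂μST := by
          refine lintegral_mono fun p => ?_
          have h := hbound ν hν0 hν1 p (u p.1 p.2)
          rw [← ofReal_norm, Real.norm_eq_abs]
          refine (ENNReal.ofReal_le_ofReal h).trans ?_
          by_cases hp : p ∈ J ×ˢ B
          · rw [indicator_of_mem hp, indicator_of_mem hp, ENNReal.ofReal_mul hM,
              ENNReal.ofReal_add (norm_nonneg _) (sq_nonneg _),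
              ENNReal.ofReal_pow (norm_nonneg _), ofReal_norm]
          · rw [indicator_of_notMem hp, indicator_of_notMem hp, ENNReal.ofReal_zero]
      _ = ENNReal.ofReal M * ∫⁻ p in J ×ˢ B, (‖u p.1 p.2‖ₑ + ‖u p.1 p.2‖ₑ ^ 2) ∂μST := by
          rw [lintegral_indicator ((isClosed_tsupport _).measurableSet.prod
            (isClosed_tsupport _).measurableSet), lintegral_const_mul' _ _ ENNReal.ofReal_ne_top]
      _ ≤ rhs ν := by
          refine mul_le_mul_right ((lintegral_add_sq_le_mixedNorm hr1 hs2 hmeas hBfin hA).trans ?_) _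
          gcongr
  have hsinv : 0 ≤ 1 / 2 - 1 / s.toReal := by
    rcases eq_or_ne s ∞ with rfl | hst
    · simp
    · have : 2 ≤ s.toReal := by simpa using ENNReal.toReal_mono hst hs2
      rw [sub_nonneg]
      exact one_div_le_one_div_of_le two_pos this
  have hrinv : 0 ≤ 1 - 1 / r.toReal := by
    rcases eq_or_ne r ∞ with rfl | hrt
    · simp
    · have : 1 ≤ r.toReal := by simpa using ENNReal.toReal_mono hrt hr1
      rw [sub_nonneg]
      exact (div_le_one (by linarith)).2 this
  have hpow : Tendsto (fun ν : ℝ => ν ^ a) (nhdsWithin 0 (Ioi 0)) (nhds 0) := by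
    have h := (Real.continuousAt_rpow_const (0 : ℝ) a (Or.inr ha0.le)).tendsto
    rw [Real.zero_rpow ha0.ne'] at h
    exact h.mono_left nhdsWithin_le_nhds
  have hlim : Tendsto rhs (nhdsWithin 0 (Ioi 0)) (nhds 0) := by
    have h1 : Tendsto (fun ν : ℝ => ENNReal.ofReal
        (C * ν ^ a * N ^ ((2:ℝ) * ((2/r + 3/s).toReal - 1)))) (nhdsWithin 0 (Ioi 0)) (nhds 0) := by
      simpa using ENNReal.tendsto_ofReal ((hpow.const_mul C).mul_const
        (N ^ ((2:ℝ) * ((2/r + 3/s).toReal - 1))))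
    have hVB : volume B ^ (1 / 2 - 1 / s.toReal) ≠ ∞ := ENNReal.rpow_ne_top_of_nonneg hsinv hBfin
    have hVJ : volume J ^ (1 - 1 / r.toReal) ≠ ∞ := ENNReal.rpow_ne_top_of_nonneg hrinv hJfin
    have hVA : volume B ^ (1 / 2 : ℝ) + A ≠ ∞ := ENNReal.add_ne_top.2
      ⟨ENNReal.rpow_ne_top_of_nonneg (by norm_num) hBfin, ENNReal.ofReal_ne_top⟩
    have h2 := ENNReal.Tendsto.const_mul (ENNReal.Tendsto.const_mul (ENNReal.Tendsto.mul_const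
      (ENNReal.Tendsto.const_mul h1 (Or.inr hVB)) (Or.inr hVJ)) (Or.inr hVA))
      (Or.inr (ENNReal.ofReal_ne_top (r := M)))
    simpa [rhs] using h2
  have hfin := ge_of_tendsto hlim (eventually_of_mem (Ioc_mem_nhdsGT one_pos) hle)
  exact absurd hfin (not_le.2 (ENNReal.ofReal_pos.2 hI))
end
end

section
/- Let d ≥ 1 and let r,s ∈ [1,∞] satisfy 2/r + d/s < d/2. For v ∈ L²(ℝ^d) and t > 0 let (e^{tΔ}v)(x) := ∫_{ℝ^d} (4πt)^{−d/2} e^{−|x−y|²/(4t)} v(y) dy denote convolution with the Gaussian heat kernel. Then the set { v ∈ L²(ℝ^d) : ‖ t ↦ ‖e^{tΔ}v‖_{L^s(ℝ^d)} ‖_{L^r(0,∞)} < ∞ } is meagre in L²(ℝ^d). -/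
open MeasureTheory Set ENNReal

noncomputable section

/-- Convolution with the Gaussian heat kernel at time `t` in dimension `d`. -/
def heat (d : ℕ) (t : ℝ) (v : EuclideanSpace ℝ (Fin d) → ℝ)
    (x : EuclideanSpace ℝ (Fin d)) : ℝ :=
  ∫ y : EuclideanSpace ℝ (Fin d),
    (4 * Real.pi * t) ^ (-(d : ℝ) / 2) * Real.exp (-‖x - y‖ ^ 2 / (4 * t)) * v y

/-- Mixed `L^r((0,∞); L^s)` norm of a time-dependent scalar field. -/
def mixedNormH (d : ℕ) (r s : ℝ≥0∞) (w : ℝ → EuclideanSpace ℝ (Fin d) → ℝ) : ℝ≥0∞ :=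
  if r = ∞ then essSup (fun t => eLpNorm (w t) s volume) (volume.restrict (Ioi 0))
  else (∫⁻ t in Ioi (0:ℝ), (eLpNorm (w t) s volume) ^ r.toReal) ^ (1 / r.toReal)

open Filter Topology

/-- For functionals of unbounded norm, pointwise boundedness holds only on a meagre set. -/
theorem isMeagre_setOf_bounded_apply {E : Type*} [NormedAddCommGroup E] [NormedSpace ℝ E]
    (φ : ℕ → StrongDual ℝ E) (hφ : Tendsto (fun n => ‖φ n‖) atTop atTop) :
    IsMeagre {v : E | ∃ M : ℝ, ∀ n, |φ n v| ≤ M} := by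
  have hsub : {v : E | ∃ M : ℝ, ∀ n, |φ n v| ≤ M} ⊆ ⋃ N : ℕ, {v : E | ∀ n, |φ n v| ≤ N} := by
    rintro v ⟨M, hM⟩
    obtain ⟨N, hN⟩ := exists_nat_ge M
    exact mem_iUnion.2 ⟨N, fun n => (hM n).trans hN⟩
  refine (isMeagre_iUnion fun N => IsNowhereDense.isMeagre ?_).mono hsub
  have hclosed : IsClosed {v : E | ∀ n, |φ n v| ≤ N} := by
    rw [ofPred_forall]
    exact isClosed_iInter fun n => isClosed_le (by fun_prop) continuous_const
  rw [hclosed.isNowhereDense_iff, eq_empty_iff_forall_notMem]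
  intro v₀ hv₀
  obtain ⟨ε, hε, hball⟩ := Metric.isOpen_iff.1 isOpen_interior v₀ hv₀
  have hbound : ∀ n, ‖φ n‖ ≤ 4 * N / ε := by
    intro n
    refine (φ n).opNorm_le_of_shell (ε := ε) (c := 2) hε (by positivity) (by simp) ?_
    intro x hx hx'
    have h₁ : |φ n (v₀ + x)| ≤ N := interior_subset (hball (by simpa using hx')) n
    have h₀ : |φ n v₀| ≤ N := interior_subset hv₀ n
    have h₂ : ‖φ n x‖ ≤ 2 * N := by
      have h₃ : φ n x = φ n (v₀ + x) - φ n v₀ := by simp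
      rw [h₃, Real.norm_eq_abs]
      exact (abs_sub _ _).trans (by linarith)
    have h₄ : ε / 2 ≤ ‖x‖ := by simpa using hx
    calc ‖φ n x‖ ≤ 2 * N := h₂
      _ = 4 * N / ε * (ε / 2) := by field_simp; ring
      _ ≤ 4 * N / ε * ‖x‖ := by gcongr
  obtain ⟨n, hn⟩ := (hφ.eventually_gt_atTop (4 * N / ε)).exists
  exact (hbound n).not_gt hn

/-- The unnormalised heat kernel at time `a`. -/
def gaussianBump (d : ℕ) (a : ℝ) (x : EuclideanSpace ℝ (Fin d)) : ℝ :=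
  Real.exp (-‖x‖ ^ 2 / (4 * a))

section gaussianBump

variable {d : ℕ}

theorem gaussianBump_pos (a : ℝ) (x : EuclideanSpace ℝ (Fin d)) : 0 < gaussianBump d a x :=
  Real.exp_pos _

theorem continuous_gaussianBump (a : ℝ) : Continuous (gaussianBump d a) := by
  unfold gaussianBump
  fun_prop

theorem gaussianBump_le_one {a : ℝ} (ha : 0 < a) (x : EuclideanSpace ℝ (Fin d)) :
    gaussianBump d a x ≤ 1 :=
  Real.exp_le_one_iff.2 (div_nonpos_of_nonpos_of_nonneg (by simp) (by positivity))

theorem gaussianBump_mono {a b : ℝ} (ha : 0 < a) (hab : a ≤ b) (x : EuclideanSpace ℝ (Fin d)) :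
    gaussianBump d a x ≤ gaussianBump d b x := by
  unfold gaussianBump
  rw [Real.exp_le_exp, neg_div, neg_div, neg_le_neg_iff]
  gcongr

theorem integral_gaussianBump {a : ℝ} (ha : 0 < a) :
    ∫ x, gaussianBump d a x = (4 * Real.pi * a) ^ ((d : ℝ) / 2) := by
  have h := GaussianFourier.integral_rexp_neg_mul_sq_norm (V := EuclideanSpace ℝ (Fin d))
    (b := 1 / (4 * a)) (by positivity)
  rw [finrank_euclideanSpace_fin] at h
  convert h using 1
  · congr with x
    unfold gaussianBump
    congr 1
    ring
  · congr 1
    field_simp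

theorem integrable_gaussianBump {a : ℝ} (ha : 0 < a) : Integrable (gaussianBump d a) := by
  apply Integrable.of_integral_ne_zero
  rw [integral_gaussianBump ha]
  positivity

theorem gaussianBump_rpow {a p : ℝ} (hp : 0 < p) (x : EuclideanSpace ℝ (Fin d)) :
    gaussianBump d a x ^ p = gaussianBump d (a / p) x := by
  unfold gaussianBump
  rw [← Real.exp_mul]
  congr 1
  field_simp

theorem eLpNorm_gaussianBump {a p : ℝ} (ha : 0 < a) (hp : 0 < p) :
    eLpNorm (gaussianBump d a) (ENNReal.ofReal p) volume =
      ENNReal.ofReal ((4 * Real.pi / p) ^ ((d : ℝ) / (2 * p)) * a ^ ((d : ℝ) / (2 * p))) := by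
  rw [eLpNorm_eq_lintegral_rpow_enorm_toReal (by simpa using hp) ENNReal.ofReal_ne_top,
    ENNReal.toReal_ofReal hp.le]
  have h : ∀ x, ‖gaussianBump d a x‖ₑ ^ p = ENNReal.ofReal (gaussianBump d (a / p) x) := by
    intro x
    rw [Real.enorm_eq_ofReal (gaussianBump_pos a x).le,
      ENNReal.ofReal_rpow_of_pos (gaussianBump_pos a x), gaussianBump_rpow hp]
  simp_rw [h]
  rw [← ofReal_integral_eq_lintegral_ofReal (integrable_gaussianBump (by positivity))
    (ae_of_all _ fun x => (gaussianBump_pos _ x).le), integral_gaussianBump (by positivity),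
    ENNReal.ofReal_rpow_of_pos (by positivity), ← Real.rpow_mul (by positivity),
    ← Real.mul_rpow (by positivity) ha.le]
  congr 2
  · ring
  · field_simp

theorem memLp_gaussianBump {a p : ℝ} (ha : 0 < a) (hp : 0 < p) :
    MemLp (gaussianBump d a) (ENNReal.ofReal p) volume :=
  ⟨(continuous_gaussianBump a).aestronglyMeasurable, by
    rw [eLpNorm_gaussianBump ha hp]; exact ENNReal.ofReal_lt_top⟩

theorem gaussianBump_mul_gaussianBump {a b : ℝ} (ha : 0 < a) (hb : 0 < b)
    (x y : EuclideanSpace ℝ (Fin d)) :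
    gaussianBump d a x * gaussianBump d b (x - y) =
      gaussianBump d (a + b) y * gaussianBump d (a * b / (a + b)) (x - (a / (a + b)) • y) := by
  unfold gaussianBump
  rw [← Real.exp_add, ← Real.exp_add, norm_sub_sq_real, norm_sub_sq_real, norm_smul,
    inner_smul_right, mul_pow, Real.norm_eq_abs, sq_abs]
  congr 1
  field_simp
  ring

theorem integral_gaussianBump_mul_gaussianBump {a b : ℝ} (ha : 0 < a) (hb : 0 < b)
    (y : EuclideanSpace ℝ (Fin d)) :
    ∫ x, gaussianBump d a x * gaussianBump d b (x - y) =
      (4 * Real.pi * (a * b / (a + b))) ^ ((d : ℝ) / 2) * gaussianBump d (a + b) y := by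
  simp_rw [gaussianBump_mul_gaussianBump ha hb]
  rw [integral_const_mul, integral_sub_right_eq_self, integral_gaussianBump (by positivity),
    mul_comm]

theorem integrable_gaussianBump_mul_gaussianBump {a b : ℝ} (ha : 0 < a) (hb : 0 < b)
    (y : EuclideanSpace ℝ (Fin d)) :
    Integrable fun x => gaussianBump d a x * gaussianBump d b (x - y) := by
  simp_rw [gaussianBump_mul_gaussianBump ha hb]
  exact ((integrable_gaussianBump (by positivity)).comp_sub_right _).const_mul _

end gaussianBump

section heat

variable {d : ℕ}

theorem heat_eq (t : ℝ) (v : EuclideanSpace ℝ (Fin d) → ℝ) (x : EuclideanSpace ℝ (Fin d)) :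
    heat d t v x =
      (4 * Real.pi * t) ^ (-(d : ℝ) / 2) * ∫ y, gaussianBump d t (x - y) * v y := by
  unfold heat gaussianBump
  rw [← integral_const_mul]
  simp_rw [mul_assoc]

theorem aestronglyMeasurable_heat (t : ℝ) {v : EuclideanSpace ℝ (Fin d) → ℝ}
    (hv : AEStronglyMeasurable v volume) : AEStronglyMeasurable (heat d t v) volume := by
  have h : heat d t v = fun x =>
      (4 * Real.pi * t) ^ (-(d : ℝ) / 2) * ∫ y, gaussianBump d t (x - y) * v y :=
    funext (heat_eq t v)
  rw [h]
  refine AEStronglyMeasurable.const_mul ?_ _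
  refine AEStronglyMeasurable.integral_prod_right'
    (f := fun p : EuclideanSpace ℝ (Fin d) × EuclideanSpace ℝ (Fin d) =>
      gaussianBump d t (p.1 - p.2) * v p.2) ?_
  exact (((continuous_gaussianBump t).comp (by fun_prop)).aestronglyMeasurable).mul hv.comp_snd

theorem integral_gaussianBump_mul_heat {a t : ℝ} (ha : 0 < a) (ht : 0 < t)
    {v : EuclideanSpace ℝ (Fin d) → ℝ} (hv : MemLp v 2 volume) :
    ∫ x, gaussianBump d a x * heat d t v x =
      (a / (a + t)) ^ ((d : ℝ) / 2) * ∫ y, gaussianBump d (a + t) y * v y := by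
  have hint : Integrable (fun p : EuclideanSpace ℝ (Fin d) × EuclideanSpace ℝ (Fin d) =>
      gaussianBump d a p.1 * (gaussianBump d t (p.1 - p.2) * v p.2)) (volume.prod volume) := by
    rw [integrable_prod_iff']
    · refine ⟨ae_of_all _ fun y => ?_, ?_⟩
      · simp only [← mul_assoc]
        exact (integrable_gaussianBump_mul_gaussianBump ha ht y).mul_const _
      · have h : ∀ y, ∫ x, ‖gaussianBump d a x * (gaussianBump d t (x - y) * v y)‖ =
            (4 * Real.pi * (a * t / (a + t))) ^ ((d : ℝ) / 2) *
              (gaussianBump d (a + t) y * ‖v y‖) := by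
          intro y
          simp_rw [← mul_assoc, norm_mul, Real.norm_of_nonneg (gaussianBump_pos _ _).le]
          rw [integral_mul_const, integral_gaussianBump_mul_gaussianBump ha ht]
        simp only [h]
        refine Integrable.const_mul ?_ _
        have hg := memLp_gaussianBump (d := d) (a := a + t) (by positivity) (two_pos (α := ℝ))
        rw [ENNReal.ofReal_ofNat] at hg
        exact hg.integrable_mul hv.norm
    · exact ((continuous_gaussianBump a).comp continuous_fst).aestronglyMeasurable.mul
        ((((continuous_gaussianBump t).comp (by fun_prop)).aestronglyMeasurable).mul
          hv.aestronglyMeasurable.comp_snd)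
  simp_rw [heat_eq, mul_left_comm (gaussianBump d a _), integral_const_mul]
  simp_rw [← integral_const_mul (gaussianBump d a _)]
  rw [integral_integral_swap hint]
  simp_rw [← mul_assoc, integral_mul_const, integral_gaussianBump_mul_gaussianBump ha ht,
    mul_assoc, integral_const_mul]
  rw [← mul_assoc, neg_div, Real.rpow_neg (by positivity), ← Real.inv_rpow (by positivity),
    ← Real.mul_rpow (by positivity) (by positivity)]
  congr 2
  field_simp

theorem enorm_integral_gaussianBump_mul_le {q s : ℝ≥0∞} [HolderTriple q s 1] {t T : ℝ}
    (ht : 0 < t) (htT : t ≤ T / 2) {v : EuclideanSpace ℝ (Fin d) → ℝ} (hv : MemLp v 2 volume) :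
    ‖∫ y, gaussianBump d T y * v y‖ₑ ≤
      ENNReal.ofReal (2 ^ ((d : ℝ) / 2)) * eLpNorm (gaussianBump d T) q volume *
        eLpNorm (heat d t v) s volume := by
  have ha : 0 < T - t := by linarith
  have key := integral_gaussianBump_mul_heat ha ht hv
  rw [sub_add_cancel] at key
  have hT : 0 < T := by linarith
  have hle : ‖∫ y, gaussianBump d T y * v y‖ ≤
      2 ^ ((d : ℝ) / 2) * ‖∫ x, gaussianBump d (T - t) x * heat d t v x‖ := by
    have hd : (0 : ℝ) ≤ ((T - t) / T) ^ ((d : ℝ) / 2) := by positivity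
    rw [key, norm_mul, ← mul_assoc, Real.norm_of_nonneg hd,
      ← Real.mul_rpow (by positivity) (by positivity)]
    refine le_mul_of_one_le_left (norm_nonneg _) (Real.one_le_rpow ?_ (by positivity))
    rw [mul_div_assoc', le_div_iff₀ hT]
    linarith
  calc ‖∫ y, gaussianBump d T y * v y‖ₑ
      ≤ ENNReal.ofReal (2 ^ ((d : ℝ) / 2)) *
          ‖∫ x, gaussianBump d (T - t) x * heat d t v x‖ₑ := by
        rw [← ofReal_norm, ← ofReal_norm, ← ENNReal.ofReal_mul (by positivity)]
        exact ENNReal.ofReal_le_ofReal hle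
    _ ≤ ENNReal.ofReal (2 ^ ((d : ℝ) / 2)) *
          eLpNorm (gaussianBump d (T - t) • heat d t v) 1 volume := by
        gcongr
        rw [eLpNorm_one_eq_lintegral_enorm]
        exact enorm_integral_le_lintegral_enorm _
    _ ≤ ENNReal.ofReal (2 ^ ((d : ℝ) / 2)) * (eLpNorm (gaussianBump d (T - t)) q volume *
          eLpNorm (heat d t v) s volume) := by
        gcongr
        exact eLpNorm_smul_le_mul_eLpNorm (aestronglyMeasurable_heat t hv.aestronglyMeasurable)
          (continuous_gaussianBump _).aestronglyMeasurable
    _ ≤ _ := by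
        rw [mul_assoc]
        gcongr
        refine eLpNorm_mono_real fun x => ?_
        rw [Real.norm_of_nonneg (gaussianBump_pos _ _).le]
        exact gaussianBump_mono ha (by linarith) x

/-- A pointwise bound against `‖w(t)‖_s` on `(0, τ]` yields one against the mixed norm. -/
theorem mul_rpow_le_mul_mixedNormH {r s : ℝ≥0∞} (hr : r ≠ 0)
    {w : ℝ → EuclideanSpace ℝ (Fin d) → ℝ} {A B : ℝ≥0∞} (hB : B ≠ ∞) {τ : ℝ} (hτ : 0 < τ)
    (h : ∀ t ∈ Ioc 0 τ, A ≤ B * eLpNorm (w t) s volume) :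
    A * ENNReal.ofReal τ ^ r⁻¹.toReal ≤ B * mixedNormH d r s w := by
  unfold mixedNormH
  split_ifs with hr'
  · simp only [hr', inv_top, toReal_zero, rpow_zero, mul_one]
    have hae := _root_.ae_le_essSup (μ := volume.restrict (Ioi (0 : ℝ)))
      (f := fun t => eLpNorm (w t) s volume)
    have hae' := ae_restrict_of_ae_restrict_of_subset
      (show Ioc 0 τ ⊆ Ioi 0 from fun _ ht => ht.1) hae
    have : NeBot (ae (volume.restrict (Ioc 0 τ))) := by
      rw [ae_neBot, Ne, Measure.restrict_eq_zero]
      simpa using hτ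
    obtain ⟨t, ht, ht'⟩ := (hae'.and (ae_restrict_mem measurableSet_Ioc)).exists
    exact (h t ht').trans (by gcongr)
  · have hr₀ : 0 < r.toReal := ENNReal.toReal_pos hr hr'
    have hle : A ^ r.toReal * ENNReal.ofReal τ ≤
        B ^ r.toReal * ∫⁻ t in Ioi (0 : ℝ), eLpNorm (w t) s volume ^ r.toReal := by
      calc A ^ r.toReal * ENNReal.ofReal τ
          = ∫⁻ _ in Ioc 0 τ, A ^ r.toReal := by simp
        _ ≤ ∫⁻ t in Ioc 0 τ, B ^ r.toReal * eLpNorm (w t) s volume ^ r.toReal := by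
          refine setLIntegral_mono' measurableSet_Ioc fun t ht => ?_
          rw [← ENNReal.mul_rpow_of_nonneg _ _ hr₀.le]
          exact ENNReal.rpow_le_rpow (h t ht) hr₀.le
        _ = B ^ r.toReal * ∫⁻ t in Ioc 0 τ, eLpNorm (w t) s volume ^ r.toReal :=
          lintegral_const_mul' _ _ (ENNReal.rpow_ne_top_of_nonneg hr₀.le hB)
        _ ≤ _ := by
          gcongr
          exact Ioc_subset_Ioi_self
    have hroot := ENNReal.rpow_le_rpow hle (inv_nonneg.2 hr₀.le)
    rw [one_div, ENNReal.toReal_inv]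
    rwa [ENNReal.mul_rpow_of_nonneg _ _ (inv_nonneg.2 hr₀.le),
      ENNReal.mul_rpow_of_nonneg _ _ (inv_nonneg.2 hr₀.le), ENNReal.rpow_rpow_inv hr₀.ne',
      ENNReal.rpow_rpow_inv hr₀.ne'] at hroot

theorem abs_integral_gaussianBump_mul_le_of_mixedNormH_lt_top {q : ℝ} {r s : ℝ≥0∞} (hq : 0 < q)
    (hr : r ≠ 0) [HolderTriple (ENNReal.ofReal q) s 1] {v : EuclideanSpace ℝ (Fin d) → ℝ}
    (hv : MemLp v 2 volume) (hfin : mixedNormH d r s (fun t => heat d t v) < ∞) :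
    ∃ M : ℝ, ∀ T : ℝ, 0 < T →
      |∫ y, gaussianBump d T y * v y| ≤ M * T ^ ((d : ℝ) / (2 * q) - r⁻¹.toReal) := by
  set m := mixedNormH d r s (fun t => heat d t v)
  refine ⟨2 ^ ((d : ℝ) / 2) * (4 * Real.pi / q) ^ ((d : ℝ) / (2 * q)) * m.toReal *
    2 ^ r⁻¹.toReal, fun T hT => ?_⟩
  have key := mul_rpow_le_mul_mixedNormH (d := d) hr (s := s) (w := fun t => heat d t v)
    (A := ‖∫ y, gaussianBump d T y * v y‖ₑ)
    (B := ENNReal.ofReal (2 ^ ((d : ℝ) / 2)) *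
      eLpNorm (gaussianBump d T) (ENNReal.ofReal q) volume)
    (ENNReal.mul_ne_top ENNReal.ofReal_ne_top (memLp_gaussianBump hT hq).2.ne)
    (half_pos hT) fun t ht => enorm_integral_gaussianBump_mul_le ht.1 ht.2 hv
  rw [eLpNorm_gaussianBump hT hq] at key
  have hreal := ENNReal.toReal_mono (by finiteness) key
  simp only [ENNReal.toReal_mul, toReal_enorm, Real.norm_eq_abs, ← ENNReal.toReal_rpow] at hreal
  rw [ENNReal.toReal_ofReal (by positivity), ENNReal.toReal_ofReal (by positivity),
    ENNReal.toReal_ofReal (by positivity), Real.div_rpow hT.le zero_le_two,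
    mul_div_assoc', div_le_iff₀ (by positivity)] at hreal
  rw [Real.rpow_sub hT, mul_div_assoc', le_div_iff₀ (by positivity)]
  exact hreal.trans_eq (by ring)

end heat

/-- If `2/r + d/s < d/2` then only a meagre set of `v ∈ L²(ℝ^d)` satisfies
`e^{tΔ} v ∈ L^r(0,∞;L^s)`. -/
theorem stmt_16 (d : ℕ) (hd : 1 ≤ d) (r s : ℝ≥0∞) (hr : 1 ≤ r) (hs : 1 ≤ s)
    (h : 2/r + d/s < d/2) :
    IsMeagre {v : Lp ℝ 2 (volume : Measure (EuclideanSpace ℝ (Fin d))) |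
      mixedNormH d r s (fun t => heat d t ⇑v) < ∞} := by
  have hr₀ : r ≠ 0 := (zero_lt_one.trans_le hr).ne'
  have hs₀ : s ≠ 0 := (zero_lt_one.trans_le hs).ne'
  have hd₀ : (0 : ℝ) < d := by exact_mod_cast hd
  set α := r⁻¹.toReal with hα
  set β := s⁻¹.toReal with hβ
  have hα₀ : 0 ≤ α := ENNReal.toReal_nonneg
  have hβ₀ : 0 ≤ β := ENNReal.toReal_nonneg
  have hreal : 2 * α + d * β < d / 2 := by
    have htop : (d : ℝ≥0∞) / 2 ≠ ∞ := ENNReal.div_ne_top (by simp) (by simp)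
    have h' := (ENNReal.toReal_lt_toReal h.ne_top htop).2 h
    rw [ENNReal.toReal_add (ENNReal.div_ne_top (by simp) hr₀)
      (ENNReal.div_ne_top (by simp) hs₀)] at h'
    simpa [div_eq_mul_inv, ENNReal.toReal_mul, hα, hβ] using h'
  have hβ₁ : 0 < 1 - β := by nlinarith
  set q := (1 - β)⁻¹ with hq
  have hq₀ : 0 < q := inv_pos.2 hβ₁
  have hHolder : HolderTriple (ENNReal.ofReal q) s 1 := ⟨by
    rw [← ENNReal.ofReal_toReal (ENNReal.inv_ne_top.2 hs₀), ← hβ, ← ENNReal.ofReal_inv_of_pos hq₀,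
      hq, inv_inv, ← ENNReal.ofReal_add hβ₁.le hβ₀]
    simp⟩
  set κ := (d : ℝ) / (2 * q) - α with hκ
  have hκ' : 0 < κ - d / 4 := by
    rw [hκ, hq]
    field_simp
    linarith
  let T : ℕ → ℝ := fun n => ((n : ℝ) + 1)⁻¹
  have hT : ∀ n, 0 < T n := fun n => by positivity
  have hmem : ∀ n, MemLp (gaussianBump d (T n)) 2 volume := fun n => by
    simpa using memLp_gaussianBump (d := d) (hT n) (two_pos (α := ℝ))
  let φ : ℕ → StrongDual ℝ (Lp ℝ 2 (volume : Measure (EuclideanSpace ℝ (Fin d)))) :=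
    fun n => T n ^ (-κ) • innerSL ℝ ((hmem n).toLp _)
  have hφ : ∀ n (v : Lp ℝ 2 (volume : Measure (EuclideanSpace ℝ (Fin d)))),
      φ n v = T n ^ (-κ) * ∫ y, gaussianBump d (T n) y * v y := by
    intro n v
    simp only [φ, smul_apply, innerSL_apply_apply, smul_eq_mul, L2.inner_def]
    congr 1
    refine integral_congr_ae ?_
    filter_upwards [(hmem n).coeFn_toLp] with y hy
    rw [hy]
    simp [mul_comm]
  have hnorm : ∀ n, ‖φ n‖ =
      (4 * Real.pi / 2) ^ ((d : ℝ) / (2 * 2)) * ((n : ℝ) + 1) ^ (κ - d / 4) := by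
    intro n
    have hE := eLpNorm_gaussianBump (d := d) (hT n) (two_pos (α := ℝ))
    rw [ENNReal.ofReal_ofNat] at hE
    rw [norm_smul, innerSL_apply_norm, Lp.norm_toLp, hE, ENNReal.toReal_ofReal (by positivity),
      Real.norm_of_nonneg (by positivity), mul_left_comm, ← Real.rpow_add (hT n),
      Real.inv_rpow (by positivity), ← Real.rpow_neg (by positivity)]
    congr 2
    ring
  have htend : Tendsto (fun n => ‖φ n‖) atTop atTop := by
    simp_rw [hnorm]
    exact ((tendsto_rpow_atTop hκ').comp
      (tendsto_atTop_add_const_right _ _ tendsto_natCast_atTop_atTop)).const_mul_atTop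
        (by positivity)
  refine (isMeagre_setOf_bounded_apply φ htend).mono fun v hv => ?_
  obtain ⟨M, hM⟩ := abs_integral_gaussianBump_mul_le_of_mixedNormH_lt_top hq₀ hr₀ (Lp.memLp v) hv
  refine ⟨M, fun n => ?_⟩
  rw [hφ, abs_mul, abs_of_pos (Real.rpow_pos_of_pos (hT n) _), Real.rpow_neg (hT n).le,
    inv_mul_le_iff₀ (Real.rpow_pos_of_pos (hT n) _), mul_comm]
  exact hM _ (hT n)

end
end
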